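/- Let r₂(d) = (2/√π)·Γ(d/2 + 1)^{1/d} and define ρ(d) = Vol(B_{2,d}(r₂(d)) ∩ B_{∞,d}(1)) / Vol(B_{∞,d}(1)). Then lim sup_{d→∞} (1/d)·log ρ(d) ≤ −(2/(πe) − 1/3)²; equivalently, ρ(d) ≤ exp(−(2/(πe) − 1/3)²·d + o(d)) as d → ∞. -/

import Mathlib

/-!
`ρ(d)` is the probability that independent uniform variables `X₁, …, X_d` on `[-1, 1]` satisfy
`X₁² + ⋯ + X_d² ≤ r₂(d)²`. The squares lie in `[0, 1]` and have mean `1/3`, whereas the Gamma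
function asymptotics give `r₂(d)² / d → 2/(πe) < 1/3`. So this is a large deviation below the mean,
and Hoeffding's inequality bounds its probability by `exp(-2 (1/3 - r₂(d)²/d)² d)`, which even gives
the rate `-2 (2/(πe) - 1/3)²`.
-/

open MeasureTheory ENNReal Filter

/-- The radius for which the Euclidean ball in `ℝ^d` has the same Lebesgue volume as the
`ℓ∞` ball of radius `1`: `r₂(d) = (2/√π) · Γ(d/2 + 1)^(1/d)`. -/
noncomputable def r2 (d : ℕ) : ℝ :=
  (2 / Real.sqrt Real.pi) * Real.Gamma ((d : ℝ) / 2 + 1) ^ ((1 : ℝ) / d)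

/-- The volume ratio `ρ(d) = Vol(B_{2,d}(r₂ d) ∩ B_{∞,d}(1)) / Vol(B_{∞,d}(1))`. -/
noncomputable def rho (d : ℕ) : ℝ≥0∞ :=
  volume ({x : EuclideanSpace ℝ (Fin d) | ‖x‖ ≤ r2 d}
      ∩ {x : EuclideanSpace ℝ (Fin d) | ∀ i, |x i| ≤ 1})
    / volume {x : EuclideanSpace ℝ (Fin d) | ∀ i, |x i| ≤ 1}

section

open Real Topology ProbabilityTheory

lemma rpow_div_exp_one_le_Gamma_add_one {s : ℝ} (hs : 0 ≤ s) :
    (s / exp 1) ^ s ≤ Gamma (s + 1) := by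
  have hint : IntegrableOn (fun x => exp (-x) * x ^ s) (Set.Ioi 0) := by
    simpa using GammaIntegral_convergent (by linarith : 0 < s + 1)
  have hsub : Set.Ioi s ⊆ Set.Ioi 0 := Set.Ioi_subset_Ioi hs
  calc (s / exp 1) ^ s = ∫ x in Set.Ioi s, exp (-x) * s ^ s := by
        rw [integral_mul_const, integral_exp_neg_Ioi, div_rpow hs (exp_pos 1).le, exp_one_rpow,
          exp_neg, div_eq_inv_mul]
    _ ≤ ∫ x in Set.Ioi s, exp (-x) * x ^ s := by
        refine setIntegral_mono_on ((integrableOn_exp_neg_Ioi s).mul_const _)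
          (hint.mono_set hsub) measurableSet_Ioi fun x hx => ?_
        gcongr
        exact hx.le
    _ ≤ ∫ x in Set.Ioi 0, exp (-x) * x ^ s := by
        refine setIntegral_mono_set hint ?_ hsub.eventuallyLE
        filter_upwards [ae_restrict_mem measurableSet_Ioi] with x hx
        exact mul_nonneg (exp_pos _).le (rpow_nonneg (le_of_lt hx) s)
    _ = Gamma (s + 1) := by rw [Gamma_eq_integral (by linarith), add_sub_cancel_right]

/- The tangent line bound `t ≤ exp (t - 1)` at `t = x / a`. With `a = s`, which is optimal, the
resulting bound for the integrand `exp (-x) * x ^ s` of the Gamma function is not integrable, hence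
the choice `a = s + 1` below. -/
lemma rpow_le_rpow_div_exp_one_mul_exp {a s x : ℝ} (ha : 0 < a) (hs : 0 ≤ s) (hx : 0 ≤ x) :
    x ^ s ≤ (a / exp 1) ^ s * exp (s * x / a) := by
  have hbase : x ≤ a / exp 1 * exp (x / a) := by
    have h := add_one_le_exp (x / a - 1)
    rw [sub_add_cancel, exp_sub, div_le_iff₀ ha] at h
    exact h.trans_eq (by ring)
  calc x ^ s ≤ (a / exp 1 * exp (x / a)) ^ s := rpow_le_rpow hx hbase hs
    _ = (a / exp 1) ^ s * exp (s * x / a) := by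
        rw [mul_rpow (by positivity) (exp_pos _).le, ← exp_mul]
        ring_nf

lemma Gamma_add_one_le_mul_rpow_div_exp_one {s : ℝ} (hs : 0 ≤ s) :
    Gamma (s + 1) ≤ (s + 1) * ((s + 1) / exp 1) ^ s := by
  have hs1 : 0 < s + 1 := by linarith
  have hneg : -(1 / (s + 1)) < 0 := by simpa using hs1
  calc Gamma (s + 1) = ∫ x in Set.Ioi 0, exp (-x) * x ^ s := by
        rw [Gamma_eq_integral hs1, add_sub_cancel_right]
    _ ≤ ∫ x in Set.Ioi 0, ((s + 1) / exp 1) ^ s * exp (-(1 / (s + 1)) * x) := by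
        refine setIntegral_mono_on (by simpa using GammaIntegral_convergent hs1)
          ((integrableOn_exp_mul_Ioi hneg 0).const_mul _) measurableSet_Ioi fun x hx => ?_
        calc exp (-x) * x ^ s
            ≤ exp (-x) * (((s + 1) / exp 1) ^ s * exp (s * x / (s + 1))) := by
              gcongr
              exact rpow_le_rpow_div_exp_one_mul_exp hs1 hs (le_of_lt hx)
          _ = ((s + 1) / exp 1) ^ s * exp (-(1 / (s + 1)) * x) := by
              rw [mul_left_comm, ← exp_add]
              congr 2
              field_simp
              ring
    _ = (s + 1) * ((s + 1) / exp 1) ^ s := by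
        rw [integral_const_mul, integral_exp_mul_Ioi hneg]
        simp [mul_comm]

lemma inv_exp_one_le_Gamma_add_one_rpow_div {s : ℝ} (hs : 0 < s) :
    (exp 1)⁻¹ ≤ Gamma (s + 1) ^ (1 / s) / s := by
  have h := rpow_le_rpow (by positivity) (rpow_div_exp_one_le_Gamma_add_one hs.le)
    (one_div_nonneg.mpr hs.le)
  rw [← rpow_mul (by positivity), mul_one_div_cancel hs.ne', Real.rpow_one] at h
  rw [le_div_iff₀ hs]
  exact (inv_mul_eq_div _ _).trans_le h

lemma Gamma_add_one_rpow_div_le {s : ℝ} (hs : 0 < s) :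
    Gamma (s + 1) ^ (1 / s) / s ≤ (s + 1) ^ (1 / s) * (1 + s⁻¹) * (exp 1)⁻¹ := by
  have h := rpow_le_rpow (Gamma_pos_of_pos (by linarith)).le
    (Gamma_add_one_le_mul_rpow_div_exp_one hs.le) (one_div_nonneg.mpr hs.le)
  rw [mul_rpow (by positivity) (by positivity), ← rpow_mul (by positivity),
    mul_one_div_cancel hs.ne', Real.rpow_one] at h
  rw [div_le_iff₀ hs]
  refine h.trans_eq ?_
  field_simp

lemma tendsto_Gamma_add_one_rpow_div :
    Tendsto (fun s : ℝ => Gamma (s + 1) ^ (1 / s) / s) atTop (𝓝 (exp 1)⁻¹) := by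
  have hroot : Tendsto (fun s : ℝ => (s + 1) ^ (1 / s)) atTop (𝓝 1) := by
    have h := (tendsto_rpow_div_mul_add 1 1 (-1) zero_ne_one).comp
      (tendsto_atTop_add_const_right atTop (1 : ℝ) tendsto_id)
    simpa [Function.comp_def] using h
  have hupper : Tendsto (fun s : ℝ => (s + 1) ^ (1 / s) * (1 + s⁻¹) * (exp 1)⁻¹) atTop
      (𝓝 (exp 1)⁻¹) := by
    simpa using (hroot.mul (tendsto_inv_atTop_zero.const_add 1)).mul_const (exp 1)⁻¹
  refine tendsto_of_tendsto_of_tendsto_of_le_of_le' tendsto_const_nhds hupper ?_ ?_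
  · filter_upwards [eventually_gt_atTop 0] with s hs
    exact inv_exp_one_le_Gamma_add_one_rpow_div hs
  · filter_upwards [eventually_gt_atTop 0] with s hs
    exact Gamma_add_one_rpow_div_le hs

lemma r2_nonneg (d : ℕ) : 0 ≤ r2 d := by
  unfold r2
  positivity

lemma r2_sq_div (d : ℕ) :
    r2 d ^ 2 / d = 2 / π * (Gamma ((d : ℝ) / 2 + 1) ^ (1 / ((d : ℝ) / 2)) / ((d : ℝ) / 2)) := by
  have hGamma : 0 ≤ Gamma ((d : ℝ) / 2 + 1) := (Gamma_pos_of_pos (by positivity)).le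
  rw [r2, mul_pow, div_pow, sq_sqrt pi_pos.le, ← rpow_mul_natCast hGamma]
  ring_nf

lemma two_div_pi_mul_exp_one_le_r2_sq_div {d : ℕ} (hd : 0 < d) :
    2 / (π * exp 1) ≤ r2 d ^ 2 / d := by
  rw [r2_sq_div, ← div_div, div_eq_mul_inv (2 / π)]
  gcongr
  exact inv_exp_one_le_Gamma_add_one_rpow_div (by positivity)

lemma tendsto_r2_sq_div :
    Tendsto (fun d : ℕ => r2 d ^ 2 / d) atTop (𝓝 (2 / (π * exp 1))) := by
  have hhalf : Tendsto (fun d : ℕ => (d : ℝ) / 2) atTop atTop :=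
    tendsto_natCast_atTop_atTop.atTop_div_const two_pos
  simp only [r2_sq_div, ← div_div, div_eq_mul_inv (2 / π)]
  exact (tendsto_Gamma_add_one_rpow_div.comp hhalf).const_mul (2 / π)

lemma two_div_pi_mul_exp_one_lt_one_third : 2 / (π * exp 1) < 1 / 3 := by
  have hexp : 2 < exp 1 := by linarith [add_one_lt_exp one_ne_zero]
  rw [div_lt_div_iff₀ (by positivity) (by norm_num)]
  nlinarith [pi_gt_three]

section Product

variable {ι : Type*} [Fintype ι] {Ω : ι → Type*} [∀ i, MeasurableSpace (Ω i)]
  (μ : ∀ i, Measure (Ω i))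

lemma cond_univ_pi [∀ i, SigmaFinite (μ i)] {s : ∀ i, Set (Ω i)} (hs : ∀ i, μ i (s i) ≠ ∞) :
    (Measure.pi μ)[|Set.univ.pi s] = Measure.pi fun i => (μ i)[|s i] := by
  refine (Measure.pi_eq fun t ht => ?_).symm
  simp_rw [cond_apply' (MeasurableSet.univ_pi ht), fun i => cond_apply' (ht i) (μ i),
    ← Set.pi_inter_distrib, Measure.pi_pi, mul_comm _⁻¹, ← div_eq_mul_inv]
  exact (ENNReal.prod_div_distrib_of_ne_top fun i _ => hs i).symm

variable [∀ i, IsProbabilityMeasure (μ i)]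

lemma measureReal_pi_sum_le_sub_le_exp {X : ∀ i, Ω i → ℝ} {a b : ι → ℝ}
    (hX : ∀ i, AEMeasurable (X i) (μ i)) (hab : ∀ i, ∀ᵐ ω ∂μ i, X i ω ∈ Set.Icc (a i) (b i))
    {t : ℝ} (ht : 0 ≤ t) :
    (Measure.pi μ).real {ω | ∑ i, X i (ω i) ≤ ∑ i, (μ i)[X i] - t}
      ≤ exp (-2 * t ^ 2 / ∑ i, (b i - a i) ^ 2) := by
  have hindep : iIndepFun (fun i (ω : ∀ i, Ω i) => -(X i (ω i) - (μ i)[X i])) (Measure.pi μ) :=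
    iIndepFun_pi fun i => ((hX i).sub_const _).neg
  have hsubG (i : ι) : HasSubgaussianMGF (fun ω : ∀ i, Ω i => -(X i (ω i) - (μ i)[X i]))
      ((‖b i - a i‖₊ / 2) ^ 2) (Measure.pi μ) := by
    have heval := measurePreserving_eval μ i
    refine .of_map (Y := Function.eval i) (X := -fun ω => X i ω - (μ i)[X i])
      heval.measurable.aemeasurable ?_
    rw [heval.map_eq]
    exact (hasSubgaussianMGF_of_mem_Icc (hX i) (hab i)).neg
  convert! HasSubgaussianMGF.measure_sum_ge_le_of_iIndepFun hindep (s := Finset.univ)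
    (fun i _ => hsubG i) ht using 2
  · ext ω
    simp only [Set.mem_ofPred_eq, neg_sub, Finset.sum_sub_distrib]
    exact le_sub_comm
  · push_cast
    simp only [div_pow, norm_eq_abs, sq_abs, ← Finset.sum_div]
    field_simp

end Product

/-- The uniform probability measure on `[-1, 1]`, the law of each coordinate of a uniform random
point of the cube. -/
noncomputable abbrev uniformIcc : Measure ℝ := volume[|Set.Icc (-1) 1]

instance : IsProbabilityMeasure uniformIcc :=
  cond_isProbabilityMeasure_of_finite (by simp) (by simp)

lemma uniformIcc_real_Icc {c : ℝ} (hc₀ : 0 ≤ c) (hc₁ : c ≤ 1) :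
    uniformIcc.real (Set.Icc (-c) c) = c := by
  have hsub : Set.Icc (-c) c ⊆ Set.Icc (-1) 1 := Set.Icc_subset_Icc (neg_le_neg hc₁) hc₁
  rw [measureReal_def, cond_apply measurableSet_Icc, Set.inter_eq_right.mpr hsub,
    Real.volume_Icc, Real.volume_Icc, ENNReal.toReal_mul, ENNReal.toReal_inv,
    ENNReal.toReal_ofReal (by norm_num), ENNReal.toReal_ofReal (by linarith)]
  ring

lemma integral_sq_uniformIcc : ∫ x, x ^ 2 ∂uniformIcc = 1 / 3 := by
  rw [uniformIcc, ProbabilityTheory.cond, integral_smul_measure, integral_Icc_eq_integral_Ioc,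
    ← intervalIntegral.integral_of_le (by norm_num), integral_pow, Real.volume_Icc,
    ENNReal.toReal_inv, ENNReal.toReal_ofReal (by norm_num)]
  norm_num

lemma rho_eq_pi_uniformIcc (d : ℕ) :
    rho d = Measure.pi (fun _ : Fin d => uniformIcc) {x | ∑ i, x i ^ 2 ≤ r2 d ^ 2} := by
  set cube : Set (Fin d → ℝ) := Set.univ.pi fun _ => Set.Icc (-1) 1 with hcube
  set ball : Set (Fin d → ℝ) := {x | ∑ i, x i ^ 2 ≤ r2 d ^ 2} with hball
  have hpre_cube : WithLp.toLp 2 ⁻¹' {x : EuclideanSpace ℝ (Fin d) | ∀ i, |x i| ≤ 1} = cube := by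
    ext x
    simp [hcube, abs_le, -Set.pi_univ_Icc]
  have hpre_ball : WithLp.toLp 2 ⁻¹' {x : EuclideanSpace ℝ (Fin d) | ‖x‖ ≤ r2 d} = ball := by
    ext x
    simp [hball, EuclideanSpace.norm_eq, sqrt_le_left (r2_nonneg d)]
  have hball_meas : MeasurableSet ball := measurableSet_le (by fun_prop) measurable_const
  have hvol := (PiLp.volume_preserving_toLp (Fin d)).measure_preimage_emb
    (MeasurableEquiv.toLp 2 (Fin d → ℝ)).measurableEmbedding
  rw [rho, ← hvol, ← hvol, Set.preimage_inter, hpre_cube, hpre_ball, Set.inter_comm,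
    ENNReal.div_eq_inv_mul, ← cond_apply' hball_meas, volume_pi, hcube, cond_univ_pi _ (by simp)]

lemma toReal_rho_le_exp {d : ℕ} (h : r2 d ^ 2 ≤ d * (1 / 3)) :
    (rho d).toReal ≤ exp (-2 * (d * (1 / 3) - r2 d ^ 2) ^ 2 / d) := by
  have hsq_mem : ∀ᵐ x ∂uniformIcc, x ^ 2 ∈ Set.Icc (0 : ℝ) 1 := by
    filter_upwards [ae_cond_mem measurableSet_Icc] with x hx
    exact ⟨sq_nonneg x, (sq_le_one_iff_abs_le_one x).mpr (abs_le.mpr hx)⟩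
  have hoeffding := measureReal_pi_sum_le_sub_le_exp (fun _ : Fin d => uniformIcc)
    (X := fun _ x => x ^ 2) (fun _ => by fun_prop) (fun _ => hsq_mem) (sub_nonneg.mpr h)
  simpa [integral_sq_uniformIcc, rho_eq_pi_uniformIcc, measureReal_def] using hoeffding

lemma pow_le_toReal_rho {d : ℕ} {c : ℝ} (hc₀ : 0 ≤ c) (hc₁ : c ≤ 1) (h : d * c ^ 2 ≤ r2 d ^ 2) :
    c ^ d ≤ (rho d).toReal := by
  have hsub : (Set.univ.pi fun _ : Fin d => Set.Icc (-c) c) ⊆ {x | ∑ i, x i ^ 2 ≤ r2 d ^ 2} := by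
    intro x hx
    calc ∑ i, x i ^ 2 ≤ ∑ _i : Fin d, c ^ 2 :=
          Finset.sum_le_sum fun i _ => sq_le_sq' (hx i trivial).1 (hx i trivial).2
      _ = d * c ^ 2 := by simp
      _ ≤ r2 d ^ 2 := h
  calc c ^ d = (Measure.pi fun _ : Fin d => uniformIcc).real
          (Set.univ.pi fun _ => Set.Icc (-c) c) := by
        rw [measureReal_def, Measure.pi_pi, ENNReal.toReal_prod]
        simp only [← measureReal_def, uniformIcc_real_Icc hc₀ hc₁, Finset.prod_const,
          Finset.card_univ, Fintype.card_fin]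
    _ ≤ (Measure.pi fun _ : Fin d => uniformIcc).real {x | ∑ i, x i ^ 2 ≤ r2 d ^ 2} :=
        measureReal_mono hsub
    _ = (rho d).toReal := by rw [rho_eq_pi_uniformIcc, measureReal_def]

lemma sqrt_pow_le_toReal_rho {d : ℕ} (hd : 0 < d) :
    √(2 / (π * exp 1)) ^ d ≤ (rho d).toReal := by
  have hle_one : 2 / (π * exp 1) ≤ 1 := by linarith [two_div_pi_mul_exp_one_lt_one_third]
  refine pow_le_toReal_rho (sqrt_nonneg _) (sqrt_le_one.mpr hle_one) ?_
  rw [sq_sqrt (by positivity), ← le_div_iff₀' (by positivity)]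
  exact two_div_pi_mul_exp_one_le_r2_sq_div hd

lemma log_sqrt_le_log_rho_div {d : ℕ} (hd : 0 < d) :
    log √(2 / (π * exp 1)) ≤ log (rho d).toReal / d := by
  have h := log_le_log (by positivity) (sqrt_pow_le_toReal_rho hd)
  rwa [Real.log_pow, ← le_div_iff₀' (by positivity)] at h

lemma log_rho_div_le {d : ℕ} (hd : 0 < d) (h : r2 d ^ 2 / d ≤ 1 / 3) :
    log (rho d).toReal / d ≤ -2 * (r2 d ^ 2 / d - 1 / 3) ^ 2 := by
  have hd' : (0 : ℝ) < d := by exact_mod_cast hd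
  have hpos : 0 < (rho d).toReal := lt_of_lt_of_le (by positivity) (sqrt_pow_le_toReal_rho hd)
  have hlog := log_le_log hpos (toReal_rho_le_exp ((div_le_iff₀' hd').mp h))
  rw [log_exp] at hlog
  rw [div_le_iff₀ hd']
  refine hlog.trans_eq ?_
  field_simp
  ring

theorem limsup_log_rho_div_le_general :
    limsup (fun d : ℕ => log (rho d).toReal / d) atTop
      ≤ -2 * (2 / (π * exp 1) - 1 / 3) ^ 2 := by
  -- In `ℝ`, `limsup` has a junk value for functions that tend to `-∞`; this rules that out.
  have hlower : ∀ᶠ d : ℕ in atTop, log √(2 / (π * exp 1)) ≤ log (rho d).toReal / d := by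
    filter_upwards [eventually_gt_atTop 0] with d hd
    exact log_sqrt_le_log_rho_div hd
  have hupper : ∀ᶠ d : ℕ in atTop,
      log (rho d).toReal / d ≤ -2 * (r2 d ^ 2 / d - 1 / 3) ^ 2 := by
    filter_upwards [eventually_gt_atTop 0,
      tendsto_r2_sq_div.eventually_le_const two_div_pi_mul_exp_one_lt_one_third] with d hd hr2
    exact log_rho_div_le hd hr2
  have hlim : Tendsto (fun d : ℕ => -2 * (r2 d ^ 2 / d - 1 / 3) ^ 2) atTop
      (𝓝 (-2 * (2 / (π * exp 1) - 1 / 3) ^ 2)) :=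
    ((tendsto_r2_sq_div.sub_const _).pow 2).const_mul _
  exact (limsup_le_limsup hupper (isCoboundedUnder_le_of_eventually_le atTop hlower)
    hlim.isBoundedUnder_le).trans_eq hlim.limsup_eq

end

/-- `limsup_{d→∞} (1/d) · log ρ(d) ≤ −(2/(πe) − 1/3)²`, i.e.
`ρ(d) ≤ exp(−(2/(πe) − 1/3)² d + o(d))`. -/
theorem limsup_log_rho_div_le :
    limsup (fun d : ℕ => Real.log (rho d).toReal / d) atTop
      ≤ -(2 / (Real.pi * Real.exp 1) - 1 / 3) ^ 2 := by
  refine limsup_log_rho_div_le_general.trans ?_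
  linarith [sq_nonneg (2 / (Real.pi * Real.exp 1) - 1 / 3)]
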